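/- arXiv:1904.10371 — 2 statements merged into one kernel-verified Lean document; each statement's English description precedes it below -/
import Mathlib

section
/- Let N = 1, R > 0, let μ : [0,R] → (0,+∞] be nondecreasing, let g : [0,∞) → ℝ be such that z ↦ g(|z|) is convex with M := lim_{s→∞} g(s)/s > 0, and let h ∈ C¹(ℝ) satisfy 0 < h′(t) ≤ K for all t ∈ ℝ, for some constant K < M/R. Then every minimizer u of F(u) := ∫₀^R [g(|u′(r)|) + h(u(r))] dr on 𝒲_μ is a convex function on [0,R]. -/
open MeasureTheory Set Filter
open scoped ENNReal

noncomputable section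

/-- The space `𝒲` of functions `u` on `(0,R]`, locally absolutely continuous on `(0,R]`
(encoded by the representation `u r = -∫_r^R u'`), with `u R = 0` and
`r ↦ r^(N-1) |u' r|` in `L¹(0,R)`; `u'` is the a.e. derivative of `u`. -/
structure RadW (N : ℕ) (R : ℝ) where
  u : ℝ → ℝ
  u' : ℝ → ℝ
  integ : IntegrableOn (fun r : ℝ => r ^ (N - 1) * |u' r|) (Ioc 0 R)
  rep : ∀ r ∈ Ioc (0:ℝ) R, u r = -∫ ρ in Ioc r R, u' ρ

/-- Membership in `𝒲_μ`: the gradient constraint `|u'(r)| ≤ μ(r)` a.e. on `(0,R)`. -/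
def memWmu (N : ℕ) (R : ℝ) (μ : ℝ → ℝ≥0∞) (u : RadW N R) : Prop :=
  ∀ᵐ r ∂(volume.restrict (Ioc (0:ℝ) R)), ENNReal.ofReal |u.u' r| ≤ μ r

/-- The extended-real integral `∫ f = ∫⁻ f⁺ - ∫⁻ f⁻`, with values in `[-∞,+∞]`. -/
def ERInt (f : ℝ → ℝ) (s : Set ℝ) : EReal :=
  ((∫⁻ x in s, ENNReal.ofReal (f x) : ℝ≥0∞) : EReal)
    - ((∫⁻ x in s, ENNReal.ofReal (-f x) : ℝ≥0∞) : EReal)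

/-- The radial functional `F(u) = ∫₀^R r^(N-1) [g(|u'(r)|) + h(u(r))] dr`. -/
def Fcon (N : ℕ) (R : ℝ) (g h : ℝ → ℝ) (u : RadW N R) : EReal :=
  ERInt (fun r : ℝ => r ^ (N - 1) * (g |u.u' r| + h (u.u r))) (Ioc 0 R)

/-- The constant `M := lim_{s→∞} g(s)/s ∈ (-∞,+∞]` (realized as a liminf in `[-∞,+∞]`;
the limit exists by convexity). -/
def MconstE (g : ℝ → ℝ) : EReal :=
  Filter.liminf (fun s : ℝ => ((g s / s : ℝ) : EReal)) Filter.atTop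

/-- The right derivative `h'₊(0)` of a convex function `h` at `0`,
`h'₊(0) = inf_{t > 0} (h(t) - h(0))/t`. -/
def rightD (h : ℝ → ℝ) : ℝ := sInf ((fun t : ℝ => (h t - h 0) / t) '' Ioi 0)

/-- The left derivative `h'₋(0)` of a convex function `h` at `0`,
`h'₋(0) = sup_{t < 0} (h(t) - h(0))/t`. -/
def leftD (h : ℝ → ℝ) : ℝ := sSup ((fun t : ℝ => (h t - h 0) / t) '' Iio 0)

/-!
Replacing `u'` by `|u'|` keeps the `g`-term and the constraint and lowers `u`. As `h` is strictly
increasing, a minimizer is unchanged by this, so `u' = |u'|`. Now fix `[a, a + 2d]` and put the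
values of `u'` at `x` and `x + d` in increasing order for each `x ∈ (a, a + d]`. This again keeps
the `g`-term, respects the constraint because `μ` is nondecreasing, and moves the mass of `u'` to
the right, hence lowers `u`. By minimality nothing changes, so `u` grows at least as much on
`[a + d, a + 2d]` as on `[a, a + d]`: it is midpoint convex, and by continuity convex.
-/

theorem nonpos_of_midpoint_le {φ : ℝ → ℝ} (hφ : ContinuousOn φ (Icc 0 1))
    (h0 : φ 0 ≤ 0) (h1 : φ 1 ≤ 0)
    (hmid : ∀ x ∈ Icc (0 : ℝ) 1, ∀ y ∈ Icc (0 : ℝ) 1,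
      φ (midpoint ℝ x y) ≤ midpoint ℝ (φ x) (φ y)) {t : ℝ} (ht : t ∈ Icc (0 : ℝ) 1) :
    φ t ≤ 0 := by
  obtain ⟨m, hm, hmax⟩ := isCompact_Icc.exists_isMaxOn (nonempty_Icc.2 zero_le_one) hφ
  refine (hmax ht).trans ?_
  -- Reflecting the nearer endpoint through the maximum point `m` stays inside `[0, 1]`.
  rcases le_total m (1 / 2) with hm2 | hm2
  · have hmem : 2 * m ∈ Icc (0 : ℝ) 1 := ⟨by linarith [hm.1], by linarith⟩
    have hle := hmid 0 (by simp) (2 * m) hmem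
    rw [show midpoint ℝ 0 (2 * m) = m by simp [midpoint_eq_smul_add]] at hle
    have hmaxm : φ (2 * m) ≤ φ m := hmax hmem
    simp only [midpoint_eq_smul_add, invOf_eq_inv, smul_eq_mul] at hle
    linarith
  · have hmem : 2 * m - 1 ∈ Icc (0 : ℝ) 1 := ⟨by linarith, by linarith [hm.2]⟩
    have hle := hmid 1 (by simp) (2 * m - 1) hmem
    rw [show midpoint ℝ 1 (2 * m - 1) = m by simp [midpoint_eq_smul_add]] at hle
    have hmaxm : φ (2 * m - 1) ≤ φ m := hmax hmem
    simp only [midpoint_eq_smul_add, invOf_eq_inv, smul_eq_mul] at hle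
    linarith

theorem convexOn_of_continuousOn_of_midpoint_le {E : Type*} [AddCommGroup E] [Module ℝ E]
    [TopologicalSpace E] [IsTopologicalAddGroup E] [ContinuousSMul ℝ E] {s : Set E} {f : E → ℝ}
    (hs : Convex ℝ s) (hf : ContinuousOn f s)
    (hmid : ∀ x ∈ s, ∀ y ∈ s, f (midpoint ℝ x y) ≤ midpoint ℝ (f x) (f y)) :
    ConvexOn ℝ s f := by
  refine convexOn_iff_forall_pos.2 ⟨hs, fun x hx y hy a b ha hb hab => ?_⟩
  let γ : ℝ →ᵃ[ℝ] E := AffineMap.lineMap x y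
  let ℓ : ℝ →ᵃ[ℝ] ℝ := AffineMap.lineMap (f x) (f y)
  have hγs : MapsTo γ (Icc 0 1) s := fun t ht => hs.lineMap_mem hx hy ht
  have hγ : Continuous γ := AffineMap.lineMap_continuous
  have hℓ : Continuous ℓ := AffineMap.lineMap_continuous
  have hchord : f (γ b) - ℓ b ≤ 0 := by
    refine nonpos_of_midpoint_le (φ := fun t => f (γ t) - ℓ t)
      ((hf.comp hγ.continuousOn hγs).sub hℓ.continuousOn) (by simp [γ, ℓ]) (by simp [γ, ℓ])
      (fun t ht t' ht' => ?_) ⟨hb.le, by linarith⟩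
    have hle := hmid _ (hγs ht) _ (hγs ht')
    rw [γ.map_midpoint, ℓ.map_midpoint]
    simp only [midpoint_eq_smul_add, smul_eq_mul] at hle ⊢
    linarith
  obtain rfl : a = 1 - b := by linarith
  simpa [γ, ℓ, AffineMap.lineMap_apply_module] using hchord

theorem apply_zero_le_of_convexOn_of_even {E : Type*} [AddCommGroup E] [Module ℝ E] {f : E → ℝ}
    (hf : ConvexOn ℝ univ f) (heven : Function.Even f) (x : E) : f 0 ≤ f x := by
  have half_nonneg : (0 : ℝ) ≤ 1 / 2 := by norm_num
  have hle := hf.2 (mem_univ x) (mem_univ (-x)) half_nonneg half_nonneg (by norm_num)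
  rw [smul_neg, add_neg_cancel, heven x, smul_eq_mul] at hle
  linarith

section Measure

variable {α : Type*} [MeasurableSpace α] {ν : Measure α}

theorem ae_eq_of_integral_comp_le {f k : α → ℝ} {h : ℝ → ℝ} (hh : StrictMono h) (hfk : f ≤ᵐ[ν] k)
    (hf : Integrable (fun x => h (f x)) ν) (hk : Integrable (fun x => h (k x)) ν)
    (hle : ∫ x, h (k x) ∂ν ≤ ∫ x, h (f x) ∂ν) : f =ᵐ[ν] k := by
  have hcomp : (fun x => h (f x)) ≤ᵐ[ν] fun x => h (k x) := hfk.mono fun x hx => hh.monotone hx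
  have heq := (integral_mono_ae hf hk hcomp).antisymm hle
  exact ((integral_eq_iff_of_ae_le hf hk hcomp).1 heq).mono fun x hx => hh.injective hx

theorem ae_eq_abs_of_integral_eq_integral_abs {f : α → ℝ} (hf : Integrable (fun x => |f x|) ν)
    (heq : ∫ x, f x ∂ν = ∫ x, |f x| ∂ν) : f =ᵐ[ν] fun x => |f x| := by
  have hfi : Integrable f ν := by
    by_contra hnot
    rw [integral_undef hnot, eq_comm,
      integral_eq_zero_iff_of_nonneg (fun x => abs_nonneg (f x)) hf] at heq
    have hzero : f =ᵐ[ν] 0 := heq.mono fun x hx => abs_eq_zero.1 hx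
    exact hnot ((integrable_zero α ℝ ν).congr hzero.symm)
  exact (integral_eq_iff_of_ae_le hfi hf (ae_of_all _ fun x => le_abs_self (f x))).1 heq

theorem integrable_of_eq_or_eq {f₁ f₂ k : α → ℝ} (hk : AEStronglyMeasurable k ν)
    (hf₁ : Integrable f₁ ν) (hf₂ : Integrable f₂ ν) (hor : ∀ x, k x = f₁ x ∨ k x = f₂ x) :
    Integrable k ν := by
  refine (hf₁.abs.add hf₂.abs).mono' hk (ae_of_all _ fun x => ?_)
  rcases hor x with hx | hx <;> simp [hx]

end Measure

theorem integrableOn_of_ERInt_lt_top {f k : ℝ → ℝ} {s : Set ℝ}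
    (hf : AEStronglyMeasurable f (volume.restrict s)) (hk : IntegrableOn k s)
    (hkf : k ≤ᵐ[volume.restrict s] f) (hlt : ERInt f s < ⊤) : IntegrableOn f s := by
  have hneg : ∫⁻ x in s, ENNReal.ofReal (-f x) ≠ ⊤ := by
    refine ne_top_of_le_ne_top hk.neg.lintegral_lt_top.ne (lintegral_mono_ae ?_)
    exact hkf.mono fun x hx => ENNReal.ofReal_le_ofReal (neg_le_neg hx)
  have hpos : ∫⁻ x in s, ENNReal.ofReal (f x) ≠ ⊤ := by
    intro htop
    rw [ERInt, htop, ← EReal.coe_ennreal_toReal hneg, EReal.coe_ennreal_top,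
      EReal.top_sub_coe] at hlt
    exact hlt.false
  have hmax : IntegrableOn (fun x => max (f x) 0) s := by
    refine (lintegral_ofReal_ne_top_iff_integrable
      (hf.sup (aestronglyMeasurable_const (b := (0 : ℝ))))
      (ae_of_all _ fun x => le_max_right _ _)).1 ?_
    simpa [ENNReal.ofReal_max] using hpos
  exact integrable_of_le_of_le hf hkf (ae_of_all _ fun x => le_max_left _ _) hk hmax

theorem ERInt_eq_coe_integral {f : ℝ → ℝ} {s : Set ℝ} (hf : IntegrableOn f s) :
    ERInt f s = ((∫ x in s, f x : ℝ) : EReal) := by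
  have hpos : ∫⁻ x in s, ENNReal.ofReal (f x) ≠ ⊤ := hf.lintegral_lt_top.ne
  have hneg : ∫⁻ x in s, ENNReal.ofReal (-f x) ≠ ⊤ := hf.neg.lintegral_lt_top.ne
  rw [ERInt, integral_eq_lintegral_pos_part_sub_lintegral_neg_part hf, EReal.coe_sub,
    EReal.coe_ennreal_toReal hpos, EReal.coe_ennreal_toReal hneg]

-- `f` need not be measurable: the integral is `0` wherever `f` is not integrable.
theorem aemeasurable_setIntegral_Ioc_left (f : ℝ → ℝ) (b : ℝ) (ν : Measure ℝ) :
    AEMeasurable (fun a => ∫ x in Ioc a b, f x) ν := by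
  let A : Set ℝ := {a | IntegrableOn f (Ioc a b)}
  have hA : MeasurableSet A := by
    refine OrdConnected.measurableSet ⟨fun x hx _ _ z hz => ?_⟩
    exact IntegrableOn.mono_set hx (Ioc_subset_Ioc_left hz.1)
  have hmono : ∀ k : ℝ → ℝ, (∀ a ∈ A, IntegrableOn k (Ioc a b)) → (∀ x, 0 ≤ k x) →
      AEMeasurable (fun a => ∫ x in Ioc a b, k x) (ν.restrict A) := fun k hk hk0 =>
    aemeasurable_restrict_of_antitoneOn hA fun a ha a' _ haa' =>
      setIntegral_mono_set (hk a ha) (ae_of_all _ hk0) (Ioc_subset_Ioc_left haa').eventuallyLE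
  have hpos : ∀ a ∈ A, IntegrableOn (fun x => max (f x) 0) (Ioc a b) := fun a ha => ha.pos_part
  have hneg : ∀ a ∈ A, IntegrableOn (fun x => max (-f x) 0) (Ioc a b) := fun a ha => ha.neg_part
  have hdiff : AEMeasurable (fun a => ∫ x in Ioc a b, f x) (ν.restrict A) := by
    refine ((hmono _ hpos fun x => le_max_right _ _).sub
      (hmono _ hneg fun x => le_max_right _ _)).congr ?_
    filter_upwards [ae_restrict_mem hA] with a ha
    simp [← integral_sub (hpos a ha) (hneg a ha), max_zero_sub_max_neg_zero_eq_self]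
  have hindicator : A.indicator (fun a => ∫ x in Ioc a b, f x) = fun a => ∫ x in Ioc a b, f x :=
    indicator_eq_self.2 fun a ha => not_imp_comm.1 integral_undef ha
  rw [← hindicator]
  exact (aemeasurable_indicator_iff hA).2 hdiff

namespace RadW

variable {R : ℝ}

theorem integrableOn_abs_deriv (u : RadW 1 R) : IntegrableOn (fun r => |u.u' r|) (Ioc 0 R) := by
  simpa using u.integ

theorem aemeasurable_u (u : RadW 1 R) : AEMeasurable u.u (volume.restrict (Ioc 0 R)) := by
  refine (aemeasurable_setIntegral_Ioc_left u.u' R _).neg.congr ?_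
  filter_upwards [ae_restrict_mem measurableSet_Ioc] with r hr
  exact (u.rep r hr).symm

theorem abs_u_le_setIntegral_abs_deriv (u : RadW 1 R) {r : ℝ} (hr : r ∈ Ioc 0 R) :
    |u.u r| ≤ ∫ ρ in Ioc r R, |u.u' ρ| := by
  rw [u.rep r hr, abs_neg]
  exact abs_integral_le_integral_abs

theorem abs_u_le_integral_abs_deriv (u : RadW 1 R) {r : ℝ} (hr : r ∈ Ioc 0 R) :
    |u.u r| ≤ ∫ ρ in Ioc 0 R, |u.u' ρ| :=
  (u.abs_u_le_setIntegral_abs_deriv hr).trans <|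
    setIntegral_mono_set u.integrableOn_abs_deriv (ae_of_all _ fun ρ => abs_nonneg (u.u' ρ))
      (Ioc_subset_Ioc_left hr.1.le).eventuallyLE

theorem integrableOn_comp_u {h : ℝ → ℝ} (hh : Monotone h) (u : RadW 1 R) :
    IntegrableOn (fun r => h (u.u r)) (Ioc 0 R) := by
  let C := ∫ ρ in Ioc 0 R, |u.u' ρ|
  have hbound : ∀ᵐ r ∂volume.restrict (Ioc 0 R), -C ≤ u.u r ∧ u.u r ≤ C := by
    filter_upwards [ae_restrict_mem measurableSet_Ioc] with r hr
    exact abs_le.1 (u.abs_u_le_integral_abs_deriv hr)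
  exact integrable_of_le_of_le
    (hh.measurable.comp_aemeasurable u.aemeasurable_u).aestronglyMeasurable
    (hbound.mono fun r hr => hh hr.1) (hbound.mono fun r hr => hh hr.2)
    (integrable_const (h (-C))) (integrable_const (h C))

theorem Fcon_one (g h : ℝ → ℝ) (u : RadW 1 R) :
    Fcon 1 R g h u = ERInt (fun r => g |u.u' r| + h (u.u r)) (Ioc 0 R) := by
  simp [Fcon]

theorem integrableOn_comp_deriv {g h : ℝ → ℝ} {b c : ℝ} (hg : Measurable fun z : ℝ => g |z|)
    (hgle : ∀ z : ℝ, b * |z| + c ≤ g |z|) (hh : Monotone h) {u : RadW 1 R}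
    (hF : Fcon 1 R g h u < ⊤) : IntegrableOn (fun r => g |u.u' r|) (Ioc 0 R) := by
  have hu := u.integrableOn_comp_u hh
  have hgm : AEStronglyMeasurable (fun r => g |u.u' r|) (volume.restrict (Ioc 0 R)) := by
    simpa [Function.comp_def] using
      (hg.comp_aemeasurable u.integrableOn_abs_deriv.aemeasurable).aestronglyMeasurable
  have hminorant : IntegrableOn (fun r => b * |u.u' r| + c + h (u.u r)) (Ioc 0 R) :=
    ((u.integrableOn_abs_deriv.const_mul b).add (integrable_const c)).add hu
  have hsum : IntegrableOn (fun r => g |u.u' r| + h (u.u r)) (Ioc 0 R) :=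
    integrableOn_of_ERInt_lt_top (hgm.add hu.aestronglyMeasurable) hminorant
      (ae_of_all _ fun r => add_le_add_left (hgle (u.u' r)) _) (Fcon_one g h u ▸ hF)
  exact (hsum.sub hu).congr (ae_of_all _ fun r => add_sub_cancel_right _ _)

theorem Fcon_eq_coe_add {g h : ℝ → ℝ} (hh : Monotone h) {u : RadW 1 R}
    (hg : IntegrableOn (fun r => g |u.u' r|) (Ioc 0 R)) :
    Fcon 1 R g h u
      = (((∫ r in Ioc 0 R, g |u.u' r|) + ∫ r in Ioc 0 R, h (u.u r) : ℝ) : EReal) := by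
  have hu := u.integrableOn_comp_u hh
  rw [← integral_add hg hu, Fcon_one]
  exact ERInt_eq_coe_integral (hg.add hu)

theorem ae_eq_of_Fcon_le {g h : ℝ → ℝ} (hh : StrictMono h) {v w : RadW 1 R}
    (hgv : IntegrableOn (fun r => g |v.u' r|) (Ioc 0 R))
    (hgw : IntegrableOn (fun r => g |w.u' r|) (Ioc 0 R))
    (hgvw : ∫ r in Ioc 0 R, g |v.u' r| = ∫ r in Ioc 0 R, g |w.u' r|)
    (hvw : ∀ r ∈ Ioc 0 R, v.u r ≤ w.u r) (hF : Fcon 1 R g h w ≤ Fcon 1 R g h v) :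
    v.u =ᵐ[volume.restrict (Ioc 0 R)] w.u := by
  rw [Fcon_eq_coe_add hh.monotone hgv, Fcon_eq_coe_add hh.monotone hgw, hgvw,
    EReal.coe_le_coe_iff, add_le_add_iff_left] at hF
  exact ae_eq_of_integral_comp_le hh ((ae_restrict_iff' measurableSet_Ioc).2 (ae_of_all _ hvw))
    (v.integrableOn_comp_u hh.monotone) (w.integrableOn_comp_u hh.monotone) hF

/-- The element of `𝒲` with derivative `p`, for `N = 1`. -/
def ofDeriv (R : ℝ) (p : ℝ → ℝ) (hp : IntegrableOn p (Ioc 0 R)) : RadW 1 R where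
  u r := ∫ ρ in R..r, p ρ
  u' := p
  integ := by simpa [IntegrableOn] using hp.abs
  rep r hr := by rw [intervalIntegral.integral_of_ge hr.2]

theorem continuousOn_ofDeriv {p : ℝ → ℝ} (hp : IntegrableOn p (Ioc 0 R)) :
    ContinuousOn (ofDeriv R p hp).u (Icc 0 R) := by
  rcases lt_or_ge R 0 with hR | hR
  · simp [Icc_eq_empty_of_lt hR]
  · have hcont := intervalIntegral.continuousOn_primitive_interval'
      ((intervalIntegrable_iff_integrableOn_Ioc_of_le hR).2 hp) right_mem_uIcc
    rwa [uIcc_of_le hR] at hcont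

/-- The function whose derivative is `|u'|`: it has the same `g`-energy as `u` and lies below it. -/
def ofAbsDeriv (u : RadW 1 R) : RadW 1 R :=
  ofDeriv R (fun r => |u.u' r|) u.integrableOn_abs_deriv

theorem ofAbsDeriv_u_eq (u : RadW 1 R) {r : ℝ} (hr : r ∈ Ioc 0 R) :
    u.ofAbsDeriv.u r = -∫ ρ in Ioc r R, |u.u' ρ| :=
  u.ofAbsDeriv.rep r hr

theorem ofAbsDeriv_u_le (u : RadW 1 R) {r : ℝ} (hr : r ∈ Ioc 0 R) : u.ofAbsDeriv.u r ≤ u.u r := by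
  rw [u.ofAbsDeriv_u_eq hr]
  exact (abs_le.1 (u.abs_u_le_setIntegral_abs_deriv hr)).1

-- Equality at one point forces `u' = |u'|` a.e. to its right, hence equality further right.
theorem ofAbsDeriv_u_eq_of_le (u : RadW 1 R) {r s : ℝ} (hr : r ∈ Ioc 0 R) (hs : s ∈ Icc r R)
    (heq : u.ofAbsDeriv.u r = u.u r) : u.ofAbsDeriv.u s = u.u s := by
  have hs0 : s ∈ Ioc 0 R := ⟨hr.1.trans_le hs.1, hs.2⟩
  rw [u.ofAbsDeriv_u_eq hr, u.rep r hr, neg_inj] at heq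
  have hae : u.u' =ᵐ[volume.restrict (Ioc r R)] fun ρ => |u.u' ρ| :=
    ae_eq_abs_of_integral_eq_integral_abs
      (u.integrableOn_abs_deriv.mono_set (Ioc_subset_Ioc_left hr.1.le)) heq.symm
  rw [u.ofAbsDeriv_u_eq hs0, u.rep s hs0]
  exact congrArg Neg.neg
    (integral_congr_ae (ae_restrict_of_ae_restrict_of_subset (Ioc_subset_Ioc_left hs.1) hae)).symm

theorem eqOn_ofAbsDeriv_of_ae_eq {u : RadW 1 R}
    (hae : u.ofAbsDeriv.u =ᵐ[volume.restrict (Ioc 0 R)] u.u) :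
    EqOn u.ofAbsDeriv.u u.u (Ioc 0 R) := by
  intro s hs
  have : (ae (volume.restrict (Ioc 0 s))).NeBot := by
    simpa [ae_neBot, -ae_restrict_eq] using hs.1
  obtain ⟨r, heq, hr⟩ := ((ae_restrict_of_ae_restrict_of_subset (Ioc_subset_Ioc_right hs.2)
    hae).and (ae_restrict_mem measurableSet_Ioc)).exists
  exact u.ofAbsDeriv_u_eq_of_le ⟨hr.1, hr.2.trans hs.2⟩ ⟨hr.2, hs.2⟩ heq

theorem Fcon_lt_top_of_isMinOn {μ : ℝ → ℝ≥0∞} {g h : ℝ → ℝ} (hh : Monotone h) {u : RadW 1 R}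
    (hmin : IsMinOn (Fcon 1 R g h) {v | memWmu 1 R μ v} u) : Fcon 1 R g h u < ⊤ := by
  let z : RadW 1 R := ofDeriv R 0 integrableOn_zero
  have hz : memWmu 1 R μ z := ae_of_all _ fun r => by simp [z, ofDeriv]
  have hgz : IntegrableOn (fun r => g |z.u' r|) (Ioc 0 R) := by simp [z, ofDeriv]
  refine (isMinOn_iff.1 hmin z hz).trans_lt ?_
  rw [Fcon_eq_coe_add hh hgz]
  exact EReal.coe_lt_top _

end RadW

/-- The two-point rearrangement of `p` at distance `d`: for each `x ∈ (a, a + d]` the values of `p`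
at `x` and `x + d` are put in increasing order. -/
def pairSort (p : ℝ → ℝ) (a d x : ℝ) : ℝ :=
  if x ∈ Ioc a (a + d) then min (p x) (p (x + d))
  else if x ∈ Ioc (a + d) (a + d + d) then max (p (x - d)) (p x) else p x

section PairSort

variable {p : ℝ → ℝ} {a d x : ℝ}

theorem pairSort_of_mem_left (hx : x ∈ Ioc a (a + d)) :
    pairSort p a d x = min (p x) (p (x + d)) :=
  if_pos hx

theorem pairSort_of_mem_right (hx : x ∈ Ioc (a + d) (a + d + d)) :
    pairSort p a d x = max (p (x - d)) (p x) := by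
  rw [pairSort, if_neg fun h => h.2.not_gt hx.1, if_pos hx]

theorem pairSort_add_of_mem_left (hx : x ∈ Ioc a (a + d)) :
    pairSort p a d (x + d) = max (p x) (p (x + d)) := by
  rw [pairSort_of_mem_right ⟨by linarith [hx.1], by linarith [hx.2]⟩, add_sub_cancel_right]

theorem pairSort_of_notMem (hd : 0 ≤ d) (hx : x ∉ Ioc a (a + d + d)) : pairSort p a d x = p x := by
  rw [pairSort, if_neg fun h => hx ⟨h.1, by linarith [h.2]⟩,
    if_neg fun h => hx ⟨by linarith [h.1], h.2⟩]

theorem pairSort_le (hd : 0 ≤ d) (hx : x ≤ a + d) : pairSort p a d x ≤ p x := by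
  by_cases hmem : x ∈ Ioc a (a + d)
  · exact (pairSort_of_mem_left hmem).trans_le (min_le_left _ _)
  · exact (pairSort_of_notMem hd fun h => hmem ⟨h.1, hx⟩).le

theorem le_pairSort (hd : 0 ≤ d) (hx : a + d < x) : p x ≤ pairSort p a d x := by
  by_cases hmem : x ∈ Ioc (a + d) (a + d + d)
  · exact (le_max_right _ _).trans_eq (pairSort_of_mem_right hmem).symm
  · exact (pairSort_of_notMem hd fun h => hmem ⟨hx, h.2⟩).ge

theorem pairSort_nonneg (hp : ∀ x, 0 ≤ p x) : 0 ≤ pairSort p a d x := by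
  unfold pairSort
  split_ifs
  exacts [le_min (hp _) (hp _), le_max_of_le_right (hp _), hp _]

theorem comp_pairSort_add_comp_pairSort (G : ℝ → ℝ) (hx : x ∈ Ioc a (a + d)) :
    G (pairSort p a d x) + G (pairSort p a d (x + d)) = G (p x) + G (p (x + d)) := by
  rw [pairSort_of_mem_left hx, pairSort_add_of_mem_left hx]
  rcases le_total (p x) (p (x + d)) with hle | hle
  · rw [min_eq_left hle, max_eq_right hle]
  · rw [min_eq_right hle, max_eq_left hle, add_comm]

theorem ae_ofReal_pairSort_le {μ : ℝ → ℝ≥0∞} {b c : ℝ} (hμ : MonotoneOn μ (Ioc b c)) (hba : b ≤ a)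
    (hd : 0 ≤ d) (hp : ∀ᵐ x ∂volume.restrict (Ioc b c), ENNReal.ofReal (p x) ≤ μ x) :
    ∀ᵐ x ∂volume.restrict (Ioc b c), ENNReal.ofReal (pairSort p a d x) ≤ μ x := by
  rw [ae_restrict_iff' measurableSet_Ioc] at hp ⊢
  have hshift : ∀ᵐ x : ℝ, x - d ∈ Ioc b c → ENNReal.ofReal (p (x - d)) ≤ μ (x - d) :=
    (measurePreserving_sub_right volume d).quasiMeasurePreserving.ae hp
  filter_upwards [hp, hshift] with x hpx hpxd hx
  rcases le_or_gt x (a + d) with hxd | hxd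
  · exact (ENNReal.ofReal_le_ofReal (pairSort_le hd hxd)).trans (hpx hx)
  · by_cases hmem : x ∈ Ioc (a + d) (a + d + d)
    · have hxd' : x - d ∈ Ioc b c := ⟨by linarith, by linarith [hx.2]⟩
      rw [pairSort_of_mem_right hmem, ENNReal.ofReal_max]
      exact max_le ((hpxd hxd').trans (hμ hxd' hx (sub_le_self x hd))) (hpx hx)
    · rw [pairSort_of_notMem hd fun h => hmem ⟨hxd, h.2⟩]
      exact hpx hx

theorem integrableOn_comp_add_right_Ioc_iff {f : ℝ → ℝ} {b c : ℝ} :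
    IntegrableOn (fun x => f (x + d)) (Ioc b c) ↔ IntegrableOn f (Ioc (b + d) (c + d)) := by
  simpa [Function.comp_def] using
    (measurePreserving_add_right volume d).integrableOn_comp_preimage
      (measurableEmbedding_addRight d) (f := f) (s := Ioc (b + d) (c + d))

theorem setIntegral_comp_add_right_Ioc (f : ℝ → ℝ) (b c : ℝ) :
    ∫ x in Ioc b c, f (x + d) = ∫ x in Ioc (b + d) (c + d), f x := by
  simpa using
    (measurePreserving_add_right volume d).setIntegral_preimage_emb
      (measurableEmbedding_addRight d) f (Ioc (b + d) (c + d))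

theorem setIntegral_Ioc_eq_setIntegral_add_shift {f : ℝ → ℝ} (hd : 0 ≤ d)
    (hf : IntegrableOn f (Ioc a (a + d + d))) :
    ∫ x in Ioc a (a + d + d), f x = ∫ x in Ioc a (a + d), (f x + f (x + d)) := by
  have hsplit : Ioc a (a + d) ∪ Ioc (a + d) (a + d + d) = Ioc a (a + d + d) :=
    Ioc_union_Ioc_eq_Ioc (by linarith) (by linarith)
  rw [← hsplit, integrableOn_union] at hf
  rw [integral_add hf.1 (integrableOn_comp_add_right_Ioc_iff.2 hf.2),
    setIntegral_comp_add_right_Ioc, ← hsplit,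
    setIntegral_union (Ioc_disjoint_Ioc_of_le le_rfl) measurableSet_Ioc hf.1 hf.2]

section Integral

variable {G : ℝ → ℝ} {s : Set ℝ}

theorem integrableOn_Ioc_comp_pairSort (hG : Measurable G) (hd : 0 ≤ d)
    (hp : IntegrableOn p (Ioc a (a + d + d)))
    (hGp : IntegrableOn (fun x => G (p x)) (Ioc a (a + d + d))) :
    IntegrableOn (fun x => G (pairSort p a d x)) (Ioc a (a + d + d)) := by
  rw [← Ioc_union_Ioc_eq_Ioc (show a ≤ a + d by linarith) (show a + d ≤ a + d + d by linarith),
    integrableOn_union] at hp hGp ⊢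
  have hp_shift := integrableOn_comp_add_right_Ioc_iff.2 hp.2
  have hGp_shift := integrableOn_comp_add_right_Ioc_iff.2 hGp.2
  constructor
  · have hmin : IntegrableOn (fun x => G (min (p x) (p (x + d)))) (Ioc a (a + d)) :=
      integrable_of_eq_or_eq
        (hG.comp_aemeasurable (hp.1.aemeasurable.min hp_shift.aemeasurable)).aestronglyMeasurable
        hGp.1 hGp_shift fun x => (min_choice (p x) (p (x + d))).imp (congrArg G) (congrArg G)
    exact hmin.congr_fun (fun x hx => by rw [pairSort_of_mem_left hx]) measurableSet_Ioc
  · have hmax : IntegrableOn (fun x => G (max (p x) (p (x + d)))) (Ioc a (a + d)) :=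
      integrable_of_eq_or_eq
        (hG.comp_aemeasurable (hp.1.aemeasurable.max hp_shift.aemeasurable)).aestronglyMeasurable
        hGp.1 hGp_shift fun x => (max_choice (p x) (p (x + d))).imp (congrArg G) (congrArg G)
    refine integrableOn_comp_add_right_Ioc_iff.1 (hmax.congr_fun (fun x hx => ?_) measurableSet_Ioc)
    rw [pairSort_add_of_mem_left hx]

theorem integrableOn_comp_pairSort (hG : Measurable G) (hd : 0 ≤ d) (hs : MeasurableSet s)
    (hsub : Ioc a (a + d + d) ⊆ s) (hp : IntegrableOn p s)
    (hGp : IntegrableOn (fun x => G (p x)) s) :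
    IntegrableOn (fun x => G (pairSort p a d x)) s := by
  rw [← sdiff_union_of_subset hsub]
  refine IntegrableOn.union ?_
    (integrableOn_Ioc_comp_pairSort hG hd (hp.mono_set hsub) (hGp.mono_set hsub))
  refine (hGp.mono_set sdiff_subset).congr_fun (fun x hx => ?_) (hs.diff measurableSet_Ioc)
  rw [pairSort_of_notMem hd hx.2]

theorem setIntegral_comp_pairSort (hG : Measurable G) (hd : 0 ≤ d) (hs : MeasurableSet s)
    (hsub : Ioc a (a + d + d) ⊆ s) (hp : IntegrableOn p s)
    (hGp : IntegrableOn (fun x => G (p x)) s) :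
    ∫ x in s, G (pairSort p a d x) = ∫ x in s, G (p x) := by
  have hGq := integrableOn_comp_pairSort hG hd hs hsub hp hGp
  rw [← sub_eq_zero, ← integral_sub hGq hGp]
  calc ∫ x in s, (G (pairSort p a d x) - G (p x))
      = ∫ x in Ioc a (a + d + d), (G (pairSort p a d x) - G (p x)) :=
        setIntegral_eq_of_subset_of_forall_sdiff_eq_zero hs hsub fun x hx => by
          rw [pairSort_of_notMem hd hx.2, sub_self]
    _ = ∫ x in Ioc a (a + d), (G (pairSort p a d x) - G (p x)
          + (G (pairSort p a d (x + d)) - G (p (x + d)))) :=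
        setIntegral_Ioc_eq_setIntegral_add_shift hd ((hGq.sub hGp).mono_set hsub)
    _ = 0 := setIntegral_eq_zero_of_forall_eq_zero fun x hx => by
        linarith [comp_pairSort_add_comp_pairSort (p := p) G hx]

theorem setIntegral_Ioc_le_setIntegral_pairSort {b c r : ℝ} (hd : 0 ≤ d) (hba : b ≤ a)
    (hac : a + d + d ≤ c) (hp : IntegrableOn p (Ioc b c)) (hr : r ∈ Icc b c) :
    ∫ x in Ioc r c, p x ≤ ∫ x in Ioc r c, pairSort p a d x := by
  have hsub : Ioc a (a + d + d) ⊆ Ioc b c := Ioc_subset_Ioc hba hac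
  have hq := integrableOn_comp_pairSort measurable_id hd measurableSet_Ioc hsub hp hp
  have heq := setIntegral_comp_pairSort measurable_id hd measurableSet_Ioc hsub hp hp
  simp only [id] at hq heq
  have hleft : Ioc b r ⊆ Ioc b c := Ioc_subset_Ioc_right hr.2
  have hright : Ioc r c ⊆ Ioc b c := Ioc_subset_Ioc_left hr.1
  rcases le_or_gt r (a + d) with hrad | hrad
  · have hle : ∫ x in Ioc b r, pairSort p a d x ≤ ∫ x in Ioc b r, p x :=
      setIntegral_mono_on (hq.mono_set hleft) (hp.mono_set hleft) measurableSet_Ioc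
        fun x hx => pairSort_le hd (hx.2.trans hrad)
    rw [← Ioc_union_Ioc_eq_Ioc hr.1 hr.2,
      setIntegral_union (Ioc_disjoint_Ioc_of_le le_rfl) measurableSet_Ioc (hq.mono_set hleft)
        (hq.mono_set hright),
      setIntegral_union (Ioc_disjoint_Ioc_of_le le_rfl) measurableSet_Ioc (hp.mono_set hleft)
        (hp.mono_set hright)] at heq
    linarith
  · exact setIntegral_mono_on (hp.mono_set hright) (hq.mono_set hright) measurableSet_Ioc
      fun x hx => le_pairSort hd (hrad.trans hx.1)

theorem ae_eq_pairSort_of_setIntegral_eq {c : ℝ} (hd : 0 ≤ d) (hp : IntegrableOn p (Ioc (a + d) c))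
    (hq : IntegrableOn (pairSort p a d) (Ioc (a + d) c))
    (heq : ∫ x in Ioc (a + d) c, p x = ∫ x in Ioc (a + d) c, pairSort p a d x) :
    p =ᵐ[volume.restrict (Ioc (a + d) c)] pairSort p a d := by
  refine (integral_eq_iff_of_ae_le hp hq ?_).1 heq
  filter_upwards [ae_restrict_mem measurableSet_Ioc] with x hx
  exact le_pairSort hd hx.1

theorem setIntegral_Ioc_le_of_pairSort_ae_eq (hd : 0 ≤ d) (hp : IntegrableOn p (Ioc a (a + d + d)))
    (hae : p =ᵐ[volume.restrict (Ioc (a + d) (a + d + d))] pairSort p a d) :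
    ∫ x in Ioc a (a + d), p x ≤ ∫ x in Ioc (a + d) (a + d + d), p x := by
  have hp_left : IntegrableOn p (Ioc a (a + d)) :=
    hp.mono_set (Ioc_subset_Ioc_right (by linarith))
  have hq : IntegrableOn (pairSort p a d) (Ioc (a + d) (a + d + d)) :=
    (hp.mono_set (Ioc_subset_Ioc_left (by linarith))).congr hae
  calc ∫ x in Ioc a (a + d), p x ≤ ∫ x in Ioc a (a + d), pairSort p a d (x + d) :=
        setIntegral_mono_on hp_left (integrableOn_comp_add_right_Ioc_iff.2 hq) measurableSet_Ioc
          fun x hx => (le_max_left _ _).trans_eq (pairSort_add_of_mem_left hx).symm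
    _ = ∫ x in Ioc (a + d) (a + d + d), pairSort p a d x := setIntegral_comp_add_right_Ioc _ _ _
    _ = ∫ x in Ioc (a + d) (a + d + d), p x := (integral_congr_ae hae).symm

end Integral

end PairSort

namespace RadW

variable {R : ℝ} {μ : ℝ → ℝ≥0∞} {g h p : ℝ → ℝ}

theorem convexOn_ofDeriv (hp : IntegrableOn p (Ioc 0 R))
    (hle : ∀ a d, 0 ≤ a → 0 < d → a + d + d ≤ R →
      ∫ x in Ioc a (a + d), p x ≤ ∫ x in Ioc (a + d) (a + d + d), p x) :
    ConvexOn ℝ (Icc 0 R) (ofDeriv R p hp).u := by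
  refine convexOn_of_continuousOn_of_midpoint_le (convex_Icc 0 R) (continuousOn_ofDeriv hp) ?_
  intro x hx y hy
  wlog hxy : x < y generalizing x y
  · rcases (not_lt.1 hxy).eq_or_lt with rfl | hyx
    · simp
    · simpa only [midpoint_comm] using this y hy x hx hyx
  obtain ⟨d, hd⟩ : ∃ d, d = (y - x) / 2 := ⟨_, rfl⟩
  obtain rfl : y = x + d + d := by linarith
  have hmid : midpoint ℝ x (x + d + d) = x + d := by
    rw [midpoint_eq_smul_add, invOf_eq_inv, smul_eq_mul]
    ring
  have hd0 : 0 < d := by linarith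
  have hint := (intervalIntegrable_iff_integrableOn_Ioc_of_le (hx.1.trans hx.2)).2 hp
  have hint' : ∀ r ∈ Icc 0 R, IntervalIntegrable p volume R r := fun r hr =>
    hint.symm.mono_set (uIcc_subset_uIcc_left (Icc_subset_uIcc' hr))
  have hmem : x + d ∈ Icc 0 R := ⟨by linarith [hx.1], by linarith [hy.2]⟩
  have hinc := hle x d hx.1 hd0 hy.2
  rw [← intervalIntegral.integral_of_le (by linarith),
    ← intervalIntegral.integral_of_le (by linarith),
    ← intervalIntegral.integral_interval_sub_left (hint' _ hmem) (hint' _ hx),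
    ← intervalIntegral.integral_interval_sub_left (hint' _ hy) (hint' _ hmem)] at hinc
  rw [hmid, midpoint_eq_smul_add, invOf_eq_inv, smul_eq_mul]
  simp only [ofDeriv]
  linarith

theorem memWmu_ofDeriv_pairSort {a d : ℝ} (hμ : MonotoneOn μ (Ioc 0 R)) (ha : 0 ≤ a) (hd : 0 ≤ d)
    (hp0 : ∀ x, 0 ≤ p x) {hp : IntegrableOn p (Ioc 0 R)} (hpμ : memWmu 1 R μ (ofDeriv R p hp))
    (hq : IntegrableOn (pairSort p a d) (Ioc 0 R)) :
    memWmu 1 R μ (ofDeriv R (pairSort p a d) hq) := by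
  have hpμ' : ∀ᵐ x ∂volume.restrict (Ioc 0 R), ENNReal.ofReal (p x) ≤ μ x :=
    hpμ.mono fun x hx => by rwa [ofDeriv, abs_of_nonneg (hp0 x)] at hx
  refine (ae_ofReal_pairSort_le hμ ha hd hpμ').mono fun x hx => ?_
  rwa [ofDeriv, abs_of_nonneg (pairSort_nonneg hp0)]

theorem convexOn_ofDeriv_of_isMinOn (hμ : MonotoneOn μ (Ioc 0 R))
    (hg : Measurable fun z : ℝ => g |z|) (hh : StrictMono h) (hp : IntegrableOn p (Ioc 0 R))
    (hp0 : ∀ x, 0 ≤ p x) (hgp : IntegrableOn (fun x => g |p x|) (Ioc 0 R))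
    (hpμ : memWmu 1 R μ (ofDeriv R p hp))
    (hmin : IsMinOn (Fcon 1 R g h) {v | memWmu 1 R μ v} (ofDeriv R p hp)) :
    ConvexOn ℝ (Icc 0 R) (ofDeriv R p hp).u := by
  refine convexOn_ofDeriv hp fun a d ha hd hadR => ?_
  have hsub : Ioc a (a + d + d) ⊆ Ioc 0 R := Ioc_subset_Ioc ha hadR
  have hq : IntegrableOn (pairSort p a d) (Ioc 0 R) :=
    integrableOn_comp_pairSort measurable_id hd.le measurableSet_Ioc hsub hp hp
  have hqμ : memWmu 1 R μ (ofDeriv R _ hq) :=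
    memWmu_ofDeriv_pairSort hμ ha hd.le hp0 hpμ hq
  have hle : ∀ r ∈ Ioc 0 R, (ofDeriv R _ hq).u r ≤ (ofDeriv R p hp).u r := fun r hr => by
    rw [rep _ r hr, rep _ r hr, neg_le_neg_iff]
    exact setIntegral_Ioc_le_setIntegral_pairSort hd.le ha hadR hp (Ioc_subset_Icc_self hr)
  have hae := ae_eq_of_Fcon_le hh
    (integrableOn_comp_pairSort hg hd.le measurableSet_Ioc hsub hp hgp) hgp
    (setIntegral_comp_pairSort hg hd.le measurableSet_Ioc hsub hp hgp) hle
    (isMinOn_iff.1 hmin _ hqμ)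
  have heq : EqOn (ofDeriv R _ hq).u (ofDeriv R p hp).u (Ioc 0 R) :=
    Measure.eqOn_Ioc_of_ae_eq volume hae ((continuousOn_ofDeriv hq).mono Ioc_subset_Icc_self)
      ((continuousOn_ofDeriv hp).mono Ioc_subset_Icc_self)
  have had : a + d ∈ Ioc 0 R := ⟨by linarith, by linarith⟩
  have hright : Ioc (a + d) R ⊆ Ioc 0 R := Ioc_subset_Ioc_left had.1.le
  have hint : ∫ x in Ioc (a + d) R, p x = ∫ x in Ioc (a + d) R, pairSort p a d x := by
    have hu := heq had
    rw [rep _ _ had, rep _ _ had, neg_inj] at hu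
    exact hu.symm
  exact setIntegral_Ioc_le_of_pairSort_ae_eq hd.le (hp.mono_set hsub) <|
    ae_restrict_of_ae_restrict_of_subset (Ioc_subset_Ioc_right hadR) <|
      ae_eq_pairSort_of_setIntegral_eq hd.le (hp.mono_set hright) (hq.mono_set hright) hint

theorem Fcon_congr {u v : RadW 1 R} (hu : EqOn u.u v.u (Ioc 0 R))
    (hu' : ∀ r, |u.u' r| = |v.u' r|) : Fcon 1 R g h u = Fcon 1 R g h v := by
  have hint : EqOn (fun r => g |u.u' r| + h (u.u r)) (fun r => g |v.u' r| + h (v.u r))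
      (Ioc 0 R) := fun r hr => by simp only [hu hr, hu' r]
  rw [Fcon_one, Fcon_one, ERInt, ERInt,
    setLIntegral_congr_fun measurableSet_Ioc fun r hr => congrArg ENNReal.ofReal (hint hr),
    setLIntegral_congr_fun measurableSet_Ioc fun r hr =>
      congrArg (fun y => ENNReal.ofReal (-y)) (hint hr)]

end RadW

theorem dimension_one_minimizer_convex_general {R : ℝ} {μ : ℝ → ℝ≥0∞}
    (hμ : MonotoneOn μ (Ioc 0 R)) {g h : ℝ → ℝ} (hg : Measurable fun z : ℝ => g |z|) {b c : ℝ}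
    (hgle : ∀ z : ℝ, b * |z| + c ≤ g |z|) (hh : StrictMono h) {u : RadW 1 R}
    (hu : memWmu 1 R μ u) (hmin : IsMinOn (Fcon 1 R g h) {v | memWmu 1 R μ v} u) :
    ∃ vconv : ℝ → ℝ, ConvexOn ℝ (Icc 0 R) vconv ∧ ∀ r ∈ Ioc (0:ℝ) R, u.u r = vconv r := by
  have hgu : IntegrableOn (fun r => g |u.u' r|) (Ioc 0 R) :=
    RadW.integrableOn_comp_deriv hg hgle hh.monotone
      (RadW.Fcon_lt_top_of_isMinOn hh.monotone hmin)
  have habs : ∀ r, |u.ofAbsDeriv.u' r| = |u.u' r| := fun r => abs_abs (u.u' r)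
  have hgv : IntegrableOn (fun r => g |u.ofAbsDeriv.u' r|) (Ioc 0 R) := by simpa only [habs]
  have hv : memWmu 1 R μ u.ofAbsDeriv := by simpa only [memWmu, habs]
  have heq : EqOn u.ofAbsDeriv.u u.u (Ioc 0 R) :=
    RadW.eqOn_ofAbsDeriv_of_ae_eq <| RadW.ae_eq_of_Fcon_le hh hgv hgu (by simp only [habs])
      (fun r hr => u.ofAbsDeriv_u_le hr) (isMinOn_iff.1 hmin _ hv)
  have hvmin : IsMinOn (Fcon 1 R g h) {v | memWmu 1 R μ v} u.ofAbsDeriv :=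
    isMinOn_iff.2 fun w hw => (RadW.Fcon_congr heq habs).trans_le (isMinOn_iff.1 hmin w hw)
  exact ⟨u.ofAbsDeriv.u,
    RadW.convexOn_ofDeriv_of_isMinOn hμ hg hh u.integrableOn_abs_deriv (fun r => abs_nonneg _) hgv
      hv hvmin, fun r hr => (heq hr).symm⟩

/-- for `N = 1`, if `g` is convex (as even function) with
`M := lim_{s→∞} g(s)/s > 0` and `h ∈ C¹` satisfies `0 < h'(t) ≤ K` with `K < M/R`
(written equivalently as `K · R < M`), then every minimizer of
`F(u) = ∫₀^R [g(|u'|) + h(u)] dr` on `𝒲_μ` is convex on `[0,R]` (it agrees on `(0,R]`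
with a function convex on `[0,R]`). -/
theorem dimension_one_minimizer_convex (R : ℝ) (hR : 0 < R)
    (μ : ℝ → ℝ≥0∞) (hμmono : MonotoneOn μ (Icc 0 R)) (hμpos : ∀ r ∈ Icc (0:ℝ) R, 0 < μ r)
    (g h : ℝ → ℝ) (h' : ℝ → ℝ)
    (hg1 : ConvexOn ℝ univ (fun z : ℝ => g |z|))
    (hg2 : 0 < MconstE g)
    (hdiff : ∀ t : ℝ, HasDerivAt h (h' t) t) (hcont : Continuous h')
    (K : ℝ) (hKpos : ∀ t : ℝ, 0 < h' t ∧ h' t ≤ K)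
    (hKM : ((K * R : ℝ) : EReal) < MconstE g)
    (u : RadW 1 R) (hu : memWmu 1 R μ u)
    (hmin : ∀ v : RadW 1 R, memWmu 1 R μ v → Fcon 1 R g h u ≤ Fcon 1 R g h v) :
    ∃ vconv : ℝ → ℝ, ConvexOn ℝ (Icc 0 R) vconv ∧ ∀ r ∈ Ioc (0:ℝ) R, u.u r = vconv r := by
  have hg_le (z : ℝ) : 0 * |z| + g |0| ≤ g |z| := by
    simpa using apply_zero_le_of_convexOn_of_even hg1 (fun y => congrArg g (abs_neg y)) z
  exact dimension_one_minimizer_convex_general (hμmono.mono Ioc_subset_Icc_self)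
    (continuousOn_univ.1 (hg1.continuousOn isOpen_univ)).measurable hg_le
    (strictMono_of_hasDerivAt_pos hdiff fun t => (hKpos t).1) hu (isMinOn_iff.2 hmin)
end
end

section
/- Let ε ∈ (0, √(log 2)] and define h : ℝ → ℝ by h(u) = 4(u + ε) for u ≤ −ε and h(u) = 0 for u > −ε, and define ū : (0,2] → ℝ by ū(r) = r² − 1 − ε for r ∈ (0,1] and ū(r) = ε·log(r/2)/log 2 for r ∈ [1,2]. Then ∫₀² r·[ ū′(r)²/2 + h(ū(r)) ] dr = (ε² − log 2)/(2 log 2), and this value is ≤ 0 (strictly negative for ε < √(log 2)); in particular it is strictly smaller than the value 0 of the functional at the zero function. -/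
open MeasureTheory Set
open scoped ENNReal

noncomputable section

/-!
The graph of `ū` is glued at the level `-ε` of `h`, so each branch of `h` sees only one piece of
`ū`. On the inner disc the gain of the linear branch of `h` outweighs the Dirichlet energy and the
total is `-1/2`. On the outer annulus `h` vanishes and `ū` is the logarithmic (harmonic) profile,
whose Dirichlet energy is the capacity term `ε² / (2 log 2)`.
-/

/-- The radial Lagrangian `r ^ (N - 1) * (g |u' r| + h (u r))` for `N = 2` and `g s = s ^ 2 / 2`.
The derivative `u'` is a separate argument because the profile `u` has a corner. -/
def radialLagrangian (h u u' : ℝ → ℝ) (r : ℝ) : ℝ :=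
  r * (u' r ^ 2 / 2 + h (u r))

theorem setIntegral_Ioc_eq_add_of_eqOn_Ioo {E : Type*} [NormedAddCommGroup E] [NormedSpace ℝ E]
    {μ : Measure ℝ} [NullSingletonClass μ] {f f₁ f₂ : ℝ → E} {a b c : ℝ} (hab : a ≤ b) (hbc : b ≤ c)
    (h₁ : EqOn f f₁ (Ioo a b)) (h₂ : EqOn f f₂ (Ioo b c))
    (hf₁ : IntervalIntegrable f₁ μ a b) (hf₂ : IntervalIntegrable f₂ μ b c) :
    ∫ x in Ioc a c, f x ∂μ = (∫ x in a..b, f₁ x ∂μ) + ∫ x in b..c, f₂ x ∂μ := by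
  have hf_ab : IntervalIntegrable f μ a b := hf₁.congr_uIoo (uIoo_of_le hab ▸ h₁.symm)
  have hf_bc : IntervalIntegrable f μ b c := hf₂.congr_uIoo (uIoo_of_le hbc ▸ h₂.symm)
  rw [← intervalIntegral.integral_of_le (hab.trans hbc),
    ← intervalIntegral.integral_add_adjacent_intervals hf_ab hf_bc,
    intervalIntegral.integral_congr_Ioo_of_le hab h₁,
    intervalIntegral.integral_congr_Ioo_of_le hbc h₂]

theorem integral_mul_cube_sub_mul_id (α β a b : ℝ) :
    ∫ r in a..b, (α * r ^ 3 - β * r) =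
      α * ((b ^ 4 - a ^ 4) / 4) - β * ((b ^ 2 - a ^ 2) / 2) := by
  rw [intervalIntegral.integral_sub (Continuous.intervalIntegrable (by fun_prop) _ _)
      (Continuous.intervalIntegrable (by fun_prop) _ _),
    intervalIntegral.integral_const_mul, intervalIntegral.integral_const_mul, integral_pow,
    integral_id]
  norm_num

theorem neg_lt_mul_log_div_div_log {ε ρ R r : ℝ} (hε : 0 < ε) (hρ : 0 < ρ) (hρr : ρ < r)
    (hrR : r < R) : -ε < ε * Real.log (r / R) / Real.log (R / ρ) := by
  have hr : 0 < r := hρ.trans hρr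
  have hR : 0 < R := hr.trans hrR
  have hlog : 0 < Real.log (R / ρ) := Real.log_pos ((one_lt_div hρ).2 (hρr.trans hrR))
  have hlog_lt : -Real.log (R / ρ) < Real.log (r / R) := by
    rw [← Real.log_inv, inv_div]
    exact Real.log_lt_log (by positivity) (by gcongr)
  rw [lt_div_iff₀ hlog, neg_mul, ← mul_neg]
  gcongr

section Profile

variable {ε ρ R k m r : ℝ} {h u u' : ℝ → ℝ}

theorem radialLagrangian_of_parabolic (hk : 0 ≤ k) (hr : r ∈ Ioo 0 ρ)
    (hh : ∀ t ≤ -ε, h t = m * (t + ε)) (hu : u r = k * (r ^ 2 - ρ ^ 2) - ε)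
    (hu' : u' r = 2 * k * r) :
    radialLagrangian h u u' r = k * (2 * k + m) * r ^ 3 - k * m * ρ ^ 2 * r := by
  have hsq : r ^ 2 ≤ ρ ^ 2 := pow_le_pow_left₀ hr.1.le hr.2.le 2
  have hle : u r ≤ -ε := by
    rw [hu]
    linarith [mul_nonpos_of_nonneg_of_nonpos hk (sub_nonpos.2 hsq)]
  rw [radialLagrangian, hh _ hle, hu, hu']
  ring

theorem radialLagrangian_of_logarithmic (hε : 0 < ε) (hρ : 0 < ρ) (hr : r ∈ Ioo ρ R)
    (hh : ∀ t, -ε < t → h t = 0) (hu : u r = ε * Real.log (r / R) / Real.log (R / ρ))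
    (hu' : u' r = ε / (r * Real.log (R / ρ))) :
    radialLagrangian h u u' r = ε ^ 2 / (2 * Real.log (R / ρ) ^ 2) * r⁻¹ := by
  have hgt : -ε < u r := hu ▸ neg_lt_mul_log_div_div_log hε hρ hr.1 hr.2
  have hr₀ : r ≠ 0 := (hρ.trans hr.1).ne'
  rw [radialLagrangian, hh _ hgt, hu']
  field_simp
  ring

theorem setIntegral_radialLagrangian_of_parabolic_of_logarithmic
    (hε : 0 < ε) (hρ : 0 < ρ) (hρR : ρ < R) (hk : 0 ≤ k)
    (hh_le : ∀ t ≤ -ε, h t = m * (t + ε)) (hh_gt : ∀ t, -ε < t → h t = 0)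
    (hu_in : ∀ r ∈ Ioo 0 ρ, u r = k * (r ^ 2 - ρ ^ 2) - ε)
    (hu_out : ∀ r ∈ Ioo ρ R, u r = ε * Real.log (r / R) / Real.log (R / ρ))
    (hu'_in : ∀ r ∈ Ioo 0 ρ, u' r = 2 * k * r)
    (hu'_out : ∀ r ∈ Ioo ρ R, u' r = ε / (r * Real.log (R / ρ))) :
    ∫ r in Ioc 0 R, radialLagrangian h u u' r =
      k * (2 * k - m) * ρ ^ 4 / 4 + ε ^ 2 / (2 * Real.log (R / ρ)) := by
  have hR : 0 < R := hρ.trans hρR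
  have hinv : IntervalIntegrable (fun r : ℝ ↦ r⁻¹) volume ρ R :=
    intervalIntegrable_inv_iff.2 (Or.inr (notMem_uIcc_of_lt hρ hR))
  rw [setIntegral_Ioc_eq_add_of_eqOn_Ioo hρ.le hρR.le
      (fun r hr ↦ radialLagrangian_of_parabolic hk hr hh_le (hu_in r hr) (hu'_in r hr))
      (fun r hr ↦ radialLagrangian_of_logarithmic hε hρ hr hh_gt (hu_out r hr) (hu'_out r hr))
      (Continuous.intervalIntegrable (by fun_prop) _ _) (hinv.const_mul _),
    integral_mul_cube_sub_mul_id, intervalIntegral.integral_const_mul, integral_inv_of_pos hρ hR]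
  field_simp
  ring

end Profile

/-- an explicit non-convex minimizer. With `N = 2`, `R = 2`,
`g(s) = s²/2`, `ε ∈ (0, √(log 2)]`, `h(u) = 4(u+ε)` for `u ≤ -ε` and `h(u) = 0` for
`u > -ε`, and `ū(r) = r² - 1 - ε` on `(0,1]`, `ū(r) = ε log(r/2)/log 2` on `[1,2]`
(with a.e. derivative `ū'(r) = 2r` on `(0,1)`, `ū'(r) = ε/(r log 2)` on `(1,2)`), one has
`∫₀² r [ū'(r)²/2 + h(ū(r))] dr = (ε² - log 2)/(2 log 2) ≤ 0`, strictly negative when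
`ε < √(log 2)`; in particular the value is smaller than the value `0` at the zero
function. -/
theorem nonconvex_example_value (ε : ℝ) (hε : 0 < ε) (hε2 : ε ≤ Real.sqrt (Real.log 2))
    (h : ℝ → ℝ)
    (hhle : ∀ t : ℝ, t ≤ -ε → h t = 4 * (t + ε))
    (hhgt : ∀ t : ℝ, -ε < t → h t = 0)
    (u u' : ℝ → ℝ)
    (hu1 : ∀ r ∈ Ioc (0:ℝ) 1, u r = r ^ 2 - 1 - ε)
    (hu2 : ∀ r ∈ Icc (1:ℝ) 2, u r = ε * Real.log (r / 2) / Real.log 2)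
    (hu'1 : ∀ r ∈ Ioo (0:ℝ) 1, u' r = 2 * r)
    (hu'2 : ∀ r ∈ Ioo (1:ℝ) 2, u' r = ε / (r * Real.log 2)) :
    (∫ r in Ioc (0:ℝ) 2, r * ((u' r) ^ 2 / 2 + h (u r)))
        = (ε ^ 2 - Real.log 2) / (2 * Real.log 2) ∧
    (ε ^ 2 - Real.log 2) / (2 * Real.log 2) ≤ 0 ∧
    (ε < Real.sqrt (Real.log 2) → (ε ^ 2 - Real.log 2) / (2 * Real.log 2) < 0) := by
  refine ⟨?_, ?_, fun hlt ↦ ?_⟩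
  · have hvalue : ∫ r in Ioc 0 2, radialLagrangian h u u' r =
        1 * (2 * 1 - 4) * 1 ^ 4 / 4 + ε ^ 2 / (2 * Real.log (2 / 1)) :=
      setIntegral_radialLagrangian_of_parabolic_of_logarithmic hε one_pos one_lt_two zero_le_one
        hhle hhgt
        (fun r hr ↦ by rw [hu1 r (Ioo_subset_Ioc_self hr)]; ring)
        (fun r hr ↦ by rw [hu2 r (Ioo_subset_Icc_self hr), div_one])
        (fun r hr ↦ by rw [hu'1 r hr, mul_one])
        (fun r hr ↦ by rw [hu'2 r hr, div_one])
    refine hvalue.trans ?_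
    rw [div_one]
    field_simp
    ring
  · have hsq : ε ^ 2 ≤ Real.log 2 := (Real.le_sqrt' hε).1 hε2
    exact div_nonpos_of_nonpos_of_nonneg (sub_nonpos.2 hsq) (by positivity)
  · have hsq : ε ^ 2 < Real.log 2 := (Real.lt_sqrt hε.le).1 hlt
    exact div_neg_of_neg_of_pos (sub_neg.2 hsq) (by positivity)
end
end
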